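/- Let (R,m) be a non-Gorenstein Noetherian local ring with m³ = (0), m² ≠ (0), residue field k, and type r, and let M be a nonfree indecomposable finitely generated R-module of G-dimension zero. If b is the minimal number of generators of M, then dim_k mM = rb and the length of M is b(1+r). -/

import Mathlib

open CategoryTheory

noncomputable abbrev ExtGrp (R : Type) [CommRing R] (M N : Type) [AddCommGroup M] [Module R M]
    [AddCommGroup N] [Module R N] (i : ℕ) : Type :=
  ((Ext R (ModuleCat R) i).obj (Opposite.op (ModuleCat.of R M))).obj (ModuleCat.of R N)

/-- G-dimension zero. -/
def GDimZero (R : Type) [CommRing R] (M : Type) [AddCommGroup M] [Module R M] : Prop :=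
  Function.Bijective (Module.Dual.eval R M) ∧
  (∀ i : ℕ, 0 < i → Subsingleton (ExtGrp R M R i)) ∧
  (∀ i : ℕ, 0 < i → Subsingleton (ExtGrp R (Module.Dual R M) R i))

/-- finite self-injective dimension -/
def HasFiniteSelfInjDim (R : Type) [CommRing R] : Prop :=
  ∃ n : ℕ, ∀ (N : ModuleCat R) (i : ℕ), n < i →
    Subsingleton (((Ext R (ModuleCat R) i).obj (Opposite.op N)).obj (ModuleCat.of R R))

/-- Gorenstein local ring -/
def IsGorensteinLocalRing (R : Type) [CommRing R] : Prop :=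
  IsNoetherianRing R ∧ IsLocalRing R ∧ HasFiniteSelfInjDim R

/-- length of a module, as Krull dimension of its submodule lattice -/
noncomputable def mlength (R : Type) [CommRing R] (M : Type) [AddCommGroup M] [Module R M] :
    WithBot ℕ∞ :=
  Order.krullDim (Submodule R M)

/-- An indecomposable (nonzero) module: it is not a direct sum of two proper submodules. -/
def IsIndecomposableModule (R : Type) [CommRing R] (M : Type) [AddCommGroup M]
    [Module R M] : Prop :=
  (⊥ : Submodule R M) ≠ ⊤ ∧
    ∀ N₁ N₂ : Submodule R M, IsCompl N₁ N₂ → N₁ = ⊥ ∨ N₂ = ⊥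

/-- the type of a local ring: length of Hom(k, R) -/
noncomputable def typeLen (R : Type) [CommRing R] [IsLocalRing R] : WithBot ℕ∞ :=
  mlength R ((R ⧸ IsLocalRing.maximalIdeal R) →ₗ[R] R)

/-!
Write `k = R/𝔪`, `b` and `b'` for the minimal numbers of generators of `M` and of its dual `M*`,
and `μ = ℓ(Ext¹(k, R))`. As `M` has no free summand, all its functionals take values in `𝔪`, so
`𝔪³ = 0` and reflexivity give `𝔪²M = 0`, hence also `𝔪²M* = 0`. If `Ext¹(X, R) = 0`, then `k` is
not a summand of `X`, because `Ext¹(k, R) ≠ 0` for a ring that is not self-injective; so the socles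
of `M` and `M*` are `𝔪M` and `𝔪M*`. The socle of `X*` is `(X/𝔪X)*`, so `ℓ(𝔪M*) = br` and, by
reflexivity, `ℓ(𝔪M) = b'r`.

Dualizing `0 → 𝔪X → X → X/𝔪X → 0` for `X = M` and `X = M*` then yields `b' + bμ = b'r²` and
`b + b'μ = br²`. Eliminating `r²` leaves `b²μ = b'²μ`, and `μ ≠ 0` forces `b = b'`.
-/

universe w v u

section AbelianExt

variable {C : Type u} [Category.{v} C] [Abelian C] [HasExt.{w} C]

lemma isZero_ext_succ_iff_subsingleton {R : Type*} [Ring R] [Linear R C] [EnoughProjectives C]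
    (X Y : C) (n : ℕ) :
    Limits.IsZero (((Ext R C (n + 1)).obj (.op X)).obj Y) ↔
      Subsingleton (Abelian.Ext X Y (n + 1)) := by
  let P := projectiveResolution X
  rw [(P.isoExt (R := R) (n + 1) Y).isZero_iff, ← HomologicalComplex.exactAt_iff_isZero_homology,
    HomologicalComplex.exactAt_iff' _ n (n + 1) (n + 2) (by simp) (by simp),
    ShortComplex.moduleCat_exact_iff, subsingleton_iff_forall_eq 0]
  constructor
  · intro exact α
    obtain ⟨f, hf, rfl⟩ := P.extMk_surjective α (n + 2) rfl
    exact (P.extMk_eq_zero_iff f _ rfl hf n rfl).2 (exact f hf)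
  · intro vanish f hf
    exact (P.extMk_eq_zero_iff f (n + 2) rfl hf n rfl).1 (vanish _)

lemma subsingleton_ext_of_retract {X X' : C} (r : Retract X X') (Y : C) (n : ℕ)
    [Subsingleton (Abelian.Ext X' Y n)] : Subsingleton (Abelian.Ext X Y n) := by
  refine subsingleton_of_forall_eq 0 fun α ↦ ?_
  rw [← Abelian.Ext.mk₀_id_comp α, ← r.retract, ← Abelian.Ext.mk₀_comp_mk₀,
    Abelian.Ext.comp_assoc_of_second_deg_zero,
    Subsingleton.elim ((Abelian.Ext.mk₀ r.r).comp α (zero_add n)) 0, Abelian.Ext.comp_zero]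

lemma subsingleton_ext_of_shortExact {S : ShortComplex C} (hS : S.ShortExact) (Y : C) (n : ℕ)
    [Subsingleton (Abelian.Ext S.X₁ Y n)] [Subsingleton (Abelian.Ext S.X₃ Y n)] :
    Subsingleton (Abelian.Ext S.X₂ Y n) := by
  refine subsingleton_of_forall_eq 0 fun α ↦ ?_
  obtain ⟨β, rfl⟩ := Abelian.Ext.contravariant_sequence_exact₂ hS Y α (Subsingleton.elim _ _)
  rw [Subsingleton.elim β 0, Abelian.Ext.comp_zero]

lemma exists_comp_eq_of_subsingleton_ext {S : ShortComplex C} (hS : S.ShortExact) {Y : C}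
    [Subsingleton (Abelian.Ext S.X₃ Y 1)] (f : S.X₁ ⟶ Y) : ∃ g : S.X₂ ⟶ Y, S.f ≫ g = f := by
  obtain ⟨β, hβ⟩ := Abelian.Ext.contravariant_sequence_exact₁ hS Y (.mk₀ f) rfl
    (Subsingleton.elim _ _)
  obtain ⟨g, rfl⟩ := Abelian.Ext.homEquiv₀.symm.surjective β
  refine ⟨g, Abelian.Ext.homEquiv₀.symm.injective ?_⟩
  simpa using hβ

end AbelianExt

open IsLocalRing

section SelfInjective

variable {R : Type u} [CommRing R]

lemma subsingleton_ext_of_residueField [IsLocalRing R] [IsArtinianRing R]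
    (N : ModuleCat.{u} R) (n : ℕ)
    [Subsingleton (Abelian.Ext (ModuleCat.of R (R ⧸ maximalIdeal R)) N n)]
    (M : Type u) [AddCommGroup M] [Module R M] [Module.Finite R M] :
    Subsingleton (Abelian.Ext (ModuleCat.of R M) N n) := by
  induction ‹Module.Finite R M› using
    IsNoetherianRing.induction_on_isQuotientEquivQuotientPrime R with
  | subsingleton M =>
    refine subsingleton_of_forall_eq 0 fun α ↦ ?_
    have hM : 𝟙 (ModuleCat.of R M) = 0 :=
      (ModuleCat.isZero_of_subsingleton (.of R M)).eq_of_src _ _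
    rw [← Abelian.Ext.mk₀_id_comp α, hM, Abelian.Ext.mk₀_zero, Abelian.Ext.zero_comp]
  | quotient M p e =>
    have hp : p.asIdeal = maximalIdeal R := eq_maximalIdeal inferInstance
    exact subsingleton_ext_of_retract
      (.ofIso (e ≪≫ₗ Submodule.quotEquivOfEq _ _ hp).toModuleIso) N n
  | exact M₁ M₂ M₃ f g hf hg hfg _ _ =>
    exact subsingleton_ext_of_shortExact
      (S := ModuleCat.shortComplexOfCompEqZero f g hfg.linearMap_comp_eq_zero)
      (ModuleCat.shortComplex_shortExact _ hfg hf hg) N n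

lemma injective_of_subsingleton_ext_quotient (N : Type u) [AddCommGroup N] [Module R N]
    (h : ∀ I : Ideal R, Subsingleton (Abelian.Ext (ModuleCat.of R (R ⧸ I)) (.of R N) 1)) :
    Module.Injective R N := by
  refine Module.Baer.injective (Module.Baer.iff_surjective.2 fun I f ↦ ?_)
  have := h I
  obtain ⟨g, hg⟩ := exists_comp_eq_of_subsingleton_ext
    (S := ModuleCat.shortComplexOfCompEqZero I.subtype I.mkQ
      (LinearMap.exact_subtype_mkQ I).linearMap_comp_eq_zero)
    (ModuleCat.shortComplex_shortExact _ (LinearMap.exact_subtype_mkQ I)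
      I.subtype_injective I.mkQ_surjective) (ModuleCat.ofHom f)
  exact ⟨g.hom, congrArg ModuleCat.Hom.hom hg⟩

lemma injective_of_subsingleton_ext_residueField [IsLocalRing R] [IsArtinianRing R]
    (N : Type u) [AddCommGroup N] [Module R N]
    [Subsingleton (Abelian.Ext (ModuleCat.of R (R ⧸ maximalIdeal R)) (.of R N) 1)] :
    Module.Injective R N :=
  injective_of_subsingleton_ext_quotient N fun I ↦
    subsingleton_ext_of_residueField (.of R N) 1 (R ⧸ I)

end SelfInjective

lemma subsingleton_ext_succ_iff {R : Type} [CommRing R] (X Y : ModuleCat.{0} R) (n : ℕ) :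
    Subsingleton (((Ext R (ModuleCat R) (n + 1)).obj (.op X)).obj Y) ↔
      Subsingleton (Abelian.Ext X Y (n + 1)) :=
  ModuleCat.isZero_iff_subsingleton.symm.trans (isZero_ext_succ_iff_subsingleton.{0} X Y n)

lemma isGorensteinLocalRing_of_injective (R : Type) [CommRing R] [IsNoetherianRing R]
    [IsLocalRing R] [Module.Injective R R] : IsGorensteinLocalRing R := by
  refine ⟨inferInstance, inferInstance, 0, fun N i hi ↦ ?_⟩
  obtain ⟨n, rfl⟩ := Nat.exists_eq_succ_of_ne_zero hi.ne'
  have := Module.injective_object_of_injective_module R R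
  exact (subsingleton_ext_succ_iff _ _ n).2 (Abelian.Ext.subsingleton_of_injective _ _ _)

section Length

lemma length_add_length_of_exact {R A B C D : Type*} [Ring R] [AddCommGroup A] [Module R A]
    [AddCommGroup B] [Module R B] [AddCommGroup C] [Module R C] [AddCommGroup D] [Module R D]
    {f : A →ₗ[R] B} {g : B →ₗ[R] C} {h : C →ₗ[R] D} (hf : Function.Injective f)
    (hfg : Function.Exact f g) (hgh : Function.Exact g h) (hh : Function.Surjective h) :
    Module.length R B + Module.length R D = Module.length R A + Module.length R C := by
  have hB := Module.length_eq_add_of_exact f g.rangeRestrict hf g.surjective_rangeRestrict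
    fun x ↦ by simpa [Subtype.ext_iff] using hfg x
  have hC := Module.length_eq_add_of_exact g.range.subtype h g.range.subtype_injective hh
    fun x ↦ by simpa using hgh x
  rw [hB, hC, add_assoc]

lemma length_eq_length_add_length_quotient {R M : Type*} [Ring R] [AddCommGroup M] [Module R M]
    (S : Submodule R M) : Module.length R M = Module.length R S + Module.length R (M ⧸ S) :=
  Module.length_eq_add_of_exact _ _ S.subtype_injective S.mkQ_surjective
    (LinearMap.exact_subtype_mkQ S)

lemma length_ext_add_of_shortExact {R : Type*} [CommRing R] {C : Type u} [Category.{v} C]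
    [Abelian C] [Linear R C] [HasExt.{w} C] {S : ShortComplex C} (hS : S.ShortExact) (Y : C)
    [Subsingleton (Abelian.Ext S.X₂ Y 1)] :
    Module.length R (Abelian.Ext S.X₂ Y 0) + Module.length R (Abelian.Ext S.X₃ Y 1) =
      Module.length R (Abelian.Ext S.X₃ Y 0) + Module.length R (Abelian.Ext S.X₁ Y 0) := by
  have := hS.epi_g
  refine length_add_length_of_exact
    (f := (Abelian.Ext.mk₀ S.g).precompOfLinear R Y (zero_add 0))
    (g := (Abelian.Ext.mk₀ S.f).precompOfLinear R Y (zero_add 0))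
    (h := hS.extClass.precompOfLinear R Y rfl)
    (Abelian.Ext.precomp_mk₀_injective_of_epi Y S.g) (fun α ↦ ⟨?_, ?_⟩) (fun α ↦ ⟨?_, ?_⟩) ?_
  · exact Abelian.Ext.contravariant_sequence_exact₂ hS Y α
  · rintro ⟨β, rfl⟩
    simp [← Abelian.Ext.comp_assoc_of_second_deg_zero]
  · exact Abelian.Ext.contravariant_sequence_exact₁ hS Y α rfl
  · rintro ⟨β, rfl⟩
    simp [← Abelian.Ext.comp_assoc_of_second_deg_zero]
  · exact fun α ↦ Abelian.Ext.contravariant_sequence_exact₃ hS Y α (Subsingleton.elim _ _) rfl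

variable {R : Type u} [CommRing R]

/-- `Extⁿ` is additive in its first variable, for products of finitely many modules. -/
noncomputable def extPiLinearEquiv {ι : Type} [Fintype ι] (X : ι → ModuleCat.{u} R)
    (N : ModuleCat.{u} R) (n : ℕ) :
    Abelian.Ext (ModuleCat.of R (∀ i, X i)) N n ≃ₗ[R] ∀ i, Abelian.Ext (X i) N n where
  __ := Abelian.Ext.biproductAddEquiv (Limits.biconeIsBilimitOfLimitConeOfIsLimit
    (ModuleCat.HasLimit.productLimitCone X).isLimit) N n
  map_smul' _ _ := funext fun _ ↦ Abelian.Ext.comp_smul _ _ (zero_add n) _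

lemma length_ext_eq_of_iso {X X' : ModuleCat.{u} R} (i : X ≅ X') (N : ModuleCat.{u} R) (n : ℕ) :
    Module.length R (Abelian.Ext X N n) = Module.length R (Abelian.Ext X' N n) := by
  refine LinearEquiv.length_eq <| .ofLinearMap
    ((Abelian.Ext.mk₀ i.inv).precompOfLinear R N (zero_add n))
    ((Abelian.Ext.mk₀ i.hom).precompOfLinear R N (zero_add n)) ?_ ?_ <;>
  · ext α
    simp [← Abelian.Ext.comp_assoc_of_second_deg_zero]

lemma exists_linearEquiv_pi_quotient (I : Ideal R) [I.IsMaximal] (V : Type*) [AddCommGroup V]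
    [Module R V] [Module.Finite R V] (hV : Module.IsTorsionBySet R V I) :
    ∃ d : ℕ, Nonempty (V ≃ₗ[R] (Fin d → R ⧸ I)) := by
  let := Ideal.Quotient.field I
  let := hV.module
  have : Module.Finite (R ⧸ I) V := .of_restrictScalars_finite R _ _
  exact ⟨_, ⟨(Module.finBasis (R ⧸ I) V).equivFun.restrictScalars R⟩⟩

lemma length_ext_of_isTorsionBySet (I : Ideal R) [I.IsMaximal] (V : Type u) [AddCommGroup V]
    [Module R V] [Module.Finite R V] (hV : Module.IsTorsionBySet R V I) (N : ModuleCat.{u} R)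
    (n : ℕ) :
    Module.length R (Abelian.Ext (ModuleCat.of R V) N n) =
      Module.length R V * Module.length R (Abelian.Ext (ModuleCat.of R (R ⧸ I)) N n) := by
  obtain ⟨d, ⟨e⟩⟩ := exists_linearEquiv_pi_quotient I V hV
  have : IsSimpleModule R (R ⧸ I) := isSimpleModule_iff_isCoatom.2 (Ideal.IsMaximal.out)
  rw [length_ext_eq_of_iso e.toModuleIso, e.length_eq,
    (extPiLinearEquiv (fun _ : Fin d ↦ ModuleCat.of R (R ⧸ I)) N n).length_eq]
  simp

lemma length_ext_zero (M N : Type u) [AddCommGroup M] [Module R M] [AddCommGroup N] [Module R N] :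
    Module.length R (Abelian.Ext (ModuleCat.of R M) (ModuleCat.of R N) 0) =
      Module.length R (M →ₗ[R] N) :=
  (Abelian.Ext.linearEquiv₀.trans ModuleCat.homLinearEquiv).length_eq

lemma length_linearMap_of_isTorsionBySet (I : Ideal R) [I.IsMaximal] (V N : Type u)
    [AddCommGroup V] [Module R V] [Module.Finite R V] (hV : Module.IsTorsionBySet R V I)
    [AddCommGroup N] [Module R N] :
    Module.length R (V →ₗ[R] N) = Module.length R V * Module.length R ((R ⧸ I) →ₗ[R] N) := by
  simp only [← length_ext_zero, length_ext_of_isTorsionBySet I V hV]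

lemma length_linearMap_add_of_subsingleton_ext (I : Ideal R) [I.IsMaximal] (X N : Type u)
    [AddCommGroup X] [Module R X] [AddCommGroup N] [Module R N] [IsNoetherian R X]
    (S : Submodule R X) (hS : S ≤ Submodule.torsionBySet R X I)
    (hXS : Module.IsTorsionBySet R (X ⧸ S) I)
    [Subsingleton (Abelian.Ext (ModuleCat.of R X) (ModuleCat.of R N) 1)] :
    Module.length R (X →ₗ[R] N) + Module.length R (X ⧸ S) *
        Module.length R (Abelian.Ext (ModuleCat.of R (R ⧸ I)) (ModuleCat.of R N) 1) =
      Module.length R X * Module.length R ((R ⧸ I) →ₗ[R] N) := by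
  have hS' : Module.IsTorsionBySet R S I := fun x a ↦
    Subtype.ext ((Submodule.mem_torsionBySet_iff _ _).1 (hS x.2) a)
  have exact := LinearMap.exact_subtype_mkQ S
  have hE := length_ext_add_of_shortExact (R := R)
    (S := ModuleCat.shortComplexOfCompEqZero S.subtype S.mkQ exact.linearMap_comp_eq_zero)
    (ModuleCat.shortComplex_shortExact _ exact S.subtype_injective S.mkQ_surjective)
    (ModuleCat.of R N)
  rw [length_ext_zero, length_ext_zero, length_ext_zero, length_ext_of_isTorsionBySet I _ hXS,
    length_linearMap_of_isTorsionBySet I _ _ hXS, length_linearMap_of_isTorsionBySet I _ _ hS',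
    ← add_mul, add_comm (Module.length R (X ⧸ S)), ← length_eq_length_add_length_quotient] at hE
  exact hE

end Length

section Socle

variable {R : Type*} [CommRing R] (I : Ideal R)
variable (M N : Type*) [AddCommGroup M] [Module R M] [AddCommGroup N] [Module R N]

lemma range_lcomp_mkQ_smul_top :
    ((I • (⊤ : Submodule R M)).mkQ.lcomp R N).range =
      Submodule.torsionBySet R (M →ₗ[R] N) I := by
  ext f
  simp only [LinearMap.mem_range, Submodule.mem_torsionBySet_iff]
  constructor
  · rintro ⟨g, rfl⟩ a
    ext x
    have hx : (I • (⊤ : Submodule R M)).mkQ ((a : R) • x) = 0 :=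
      (Submodule.Quotient.mk_eq_zero _).2 (Submodule.smul_mem_smul a.2 trivial)
    simpa only [map_smul, map_zero, LinearMap.smul_apply, LinearMap.lcomp_apply',
      LinearMap.comp_apply, LinearMap.zero_apply] using congrArg g hx
  · intro hf
    have hker : I • ⊤ ≤ f.ker := Submodule.smul_le.2 fun a ha x _ ↦ by
      rw [LinearMap.mem_ker, map_smul]
      exact LinearMap.congr_fun (hf ⟨a, ha⟩) x
    exact ⟨(I • ⊤ : Submodule R M).liftQ f hker, Submodule.liftQ_mkQ _ _ hker⟩

variable {I M}

lemma smul_top_le_torsionBySet_linearMap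
    (h : I • (⊤ : Submodule R M) ≤ Submodule.torsionBySet R M I) :
    I • (⊤ : Submodule R (M →ₗ[R] N)) ≤ Submodule.torsionBySet R (M →ₗ[R] N) I := by
  refine Submodule.smul_le.2 fun a ha f _ ↦ (Submodule.mem_torsionBySet_iff _ _).2 fun c ↦ ?_
  ext x
  have hx := (Submodule.mem_torsionBySet_iff _ _).1
    (h (Submodule.smul_mem_smul ha (Submodule.mem_top (x := x)))) c
  simpa only [map_smul, map_zero, LinearMap.smul_apply, LinearMap.zero_apply] using congrArg f hx

lemma smul_top_le_torsionBySet_of_dual_apply_mem (hI : I ^ 3 = ⊥)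
    (heval : Function.Injective (Module.Dual.eval R M))
    (hM : ∀ (f : Module.Dual R M) (x : M), f x ∈ I) :
    I • (⊤ : Submodule R M) ≤ Submodule.torsionBySet R M I := by
  refine Submodule.smul_le.2 fun a ha x _ ↦ (Submodule.mem_torsionBySet_iff _ _).2 fun c ↦ ?_
  refine (map_eq_zero_iff _ heval).1 (LinearMap.ext fun f ↦ ?_)
  have hmem : (c : R) * (a * f x) ∈ I ^ 3 := by
    rw [pow_succ', pow_two]
    exact Ideal.mul_mem_mul c.2 (Ideal.mul_mem_mul ha (hM f x))
  simpa [hI] using hmem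

lemma torsionBySet_map_equiv (e : M ≃ₗ[R] N) :
    (Submodule.torsionBySet R M I).map e.toLinearMap = Submodule.torsionBySet R N I := by
  ext y
  obtain ⟨x, rfl⟩ := e.surjective y
  simp [Submodule.mem_torsionBySet_iff, Submodule.mem_map_equiv, ← map_smul]

lemma exists_linearMap_quotient_apply_eq_one [I.IsMaximal] {x : M}
    (hx : x ∉ I • (⊤ : Submodule R M)) : ∃ f : M →ₗ[R] R ⧸ I, f x = 1 := by
  let := Ideal.Quotient.field I
  obtain ⟨f, hf⟩ := Module.Projective.exists_dual_eq_one (R ⧸ I)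
    (x := (I • (⊤ : Submodule R M)).mkQ x) (by simpa using hx)
  exact ⟨f.restrictScalars R ∘ₗ (I • (⊤ : Submodule R M)).mkQ, hf⟩

end Socle

section SocleExt

variable {R : Type u} [CommRing R] (I : Ideal R) [I.IsMaximal]
variable (M N : Type u) [AddCommGroup M] [Module R M] [AddCommGroup N] [Module R N]

lemma length_torsionBySet_linearMap [Module.Finite R M] :
    Module.length R (Submodule.torsionBySet R (M →ₗ[R] N) I) =
      Module.length R (M ⧸ I • (⊤ : Submodule R M)) * Module.length R ((R ⧸ I) →ₗ[R] N) := by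
  rw [← range_lcomp_mkQ_smul_top, ← length_linearMap_of_isTorsionBySet I _ N
    (Module.isTorsionBySet_quotient_ideal_smul M I)]
  exact (LinearEquiv.ofInjective _ (LinearMap.lcomp_injective_of_surjective _
    (Submodule.mkQ_surjective _))).length_eq.symm

variable {M}

lemma torsionBySet_le_smul_top_of_subsingleton_ext (n : ℕ)
    [Nontrivial (Abelian.Ext (ModuleCat.of R (R ⧸ I)) (ModuleCat.of R N) n)]
    [Subsingleton (Abelian.Ext (ModuleCat.of R M) (ModuleCat.of R N) n)] :
    Submodule.torsionBySet R M I ≤ I • (⊤ : Submodule R M) := by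
  intro x hx
  by_contra hxI
  obtain ⟨p, hp⟩ := exists_linearMap_quotient_apply_eq_one hxI
  let s : R ⧸ I →ₗ[R] M := Submodule.liftQ I (LinearMap.toSpanSingleton R M x) fun a ha ↦
    (Submodule.mem_torsionBySet_iff _ _).1 hx ⟨a, ha⟩
  have hps : p ∘ₗ s = LinearMap.id := by
    refine Submodule.linearMap_qext _ (LinearMap.ext_ring ?_)
    change p ((1 : R) • x) = 1
    rw [one_smul, hp]
  have r : Retract (ModuleCat.of R (R ⧸ I)) (ModuleCat.of R M) :=
    ⟨ModuleCat.ofHom s, ModuleCat.ofHom p, by rw [← ModuleCat.ofHom_comp, hps]; rfl⟩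
  exact not_subsingleton _ (subsingleton_ext_of_retract r (ModuleCat.of R N) n)

end SocleExt

lemma dual_apply_mem_maximalIdeal {R : Type} [CommRing R] [IsLocalRing R] {M : Type}
    [AddCommGroup M] [Module R M] (hM : IsIndecomposableModule R M) (hfree : ¬ Module.Free R M)
    (f : Module.Dual R M) (x : M) : f x ∈ maximalIdeal R := by
  by_contra hx
  obtain ⟨u, hu⟩ : IsUnit (f x) := by simpa using hx
  let s := LinearMap.toSpanSingleton R M ((↑u⁻¹ : R) • x)
  have hfs (a : R) : f (s a) = a := by simp [s, ← hu]
  have hidem : IsIdempotentElem (s ∘ₗ f : Module.End R M) :=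
    LinearMap.ext fun y ↦ congrArg s (hfs (f y))
  rcases hM.2 _ _ (LinearMap.IsIdempotentElem.isCompl hidem) with hrange | hker
  · have hs : s 1 = 0 := by
      have hsfs : (s ∘ₗ f) (s 1) = 0 := by rw [LinearMap.range_eq_bot.1 hrange]; rfl
      rwa [LinearMap.comp_apply, hfs] at hsfs
    exact one_ne_zero (by rw [← hfs 1, hs, map_zero])
  · have hinj : Function.Injective (s ∘ f) := LinearMap.ker_eq_bot.1 hker
    have hf : Function.Bijective f := ⟨hinj.of_comp, fun a ↦ ⟨s a, hfs a⟩⟩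
    exact hfree (.of_equiv (LinearEquiv.ofBijective f hf).symm)

lemma eq_of_add_mul_eq_mul {a b r μ : ℕ∞} (ha : a ≠ ⊤) (hb : b ≠ ⊤) (hr : r ≠ ⊤) (hμ : μ ≠ ⊤)
    (hμ0 : μ ≠ 0) (hab : a * r + b + a * μ = (b * r + a) * r)
    (hba : b * r + a + b * μ = (a * r + b) * r) : a = b := by
  lift a to ℕ using ha
  lift b to ℕ using hb
  lift r to ℕ using hr
  lift μ to ℕ using hμ
  norm_cast at hμ0 hab hba ⊢
  have hsq : a * a * μ = b * b * μ := by linarith [congrArg (a * ·) hab, congrArg (b * ·) hba]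
  exact Nat.mul_self_inj.1 (Nat.eq_of_mul_eq_mul_right (Nat.pos_of_ne_zero hμ0) hsq)

lemma length_smul_top_eq_and_length_eq_of_isReflexive {R : Type u} [CommRing R]
    [IsNoetherianRing R] [IsLocalRing R] (hR : ¬ Module.Injective R R)
    (hm3 : maximalIdeal R ^ 3 = ⊥)
    (M : Type u) [AddCommGroup M] [Module R M] [Module.Finite R M] [Module.IsReflexive R M]
    (hM : ∀ (f : Module.Dual R M) (x : M), f x ∈ maximalIdeal R)
    [Subsingleton (Abelian.Ext (ModuleCat.of R M) (ModuleCat.of R R) 1)]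
    [Subsingleton (Abelian.Ext (ModuleCat.of R (Module.Dual R M)) (ModuleCat.of R R) 1)] :
    Module.length R ↥(maximalIdeal R • (⊤ : Submodule R M)) =
        Module.length R (M ⧸ maximalIdeal R • (⊤ : Submodule R M)) *
          Module.length R ((R ⧸ maximalIdeal R) →ₗ[R] R) ∧
      Module.length R M = Module.length R (M ⧸ maximalIdeal R • (⊤ : Submodule R M)) *
        (1 + Module.length R ((R ⧸ maximalIdeal R) →ₗ[R] R)) := by
  have : IsArtinianRing R := (isArtinianRing_iff_isNilpotent_maximalIdeal R).2 ⟨3, hm3⟩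
  set 𝔪 := maximalIdeal R
  have : Nontrivial (Abelian.Ext (ModuleCat.of R (R ⧸ 𝔪)) (ModuleCat.of R R) 1) :=
    not_subsingleton_iff_nontrivial.1 fun _ ↦ hR (injective_of_subsingleton_ext_residueField R)
  have hM2 := smul_top_le_torsionBySet_of_dual_apply_mem hm3 (Module.bijective_dual_eval R M).1 hM
  have hD2 := smul_top_le_torsionBySet_linearMap R hM2
  have socleM := hM2.antisymm (torsionBySet_le_smul_top_of_subsingleton_ext 𝔪 R 1)
  have socleD := hD2.antisymm (torsionBySet_le_smul_top_of_subsingleton_ext 𝔪 R 1)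
  have lengthD := length_torsionBySet_linearMap 𝔪 M R
  have lengthM := length_torsionBySet_linearMap 𝔪 (Module.Dual R M) R
  rw [← torsionBySet_map_equiv _ (Module.evalEquiv R M),
    ← ((Module.evalEquiv R M).submoduleMap _).length_eq, ← socleM] at lengthM
  rw [← socleD] at lengthD
  have seqM := length_linearMap_add_of_subsingleton_ext 𝔪 M R _ hM2
    (Module.isTorsionBySet_quotient_ideal_smul M 𝔪)
  have seqD := length_linearMap_add_of_subsingleton_ext 𝔪 (Module.Dual R M) R _ hD2
    (Module.isTorsionBySet_quotient_ideal_smul _ 𝔪)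
  have splitM := length_eq_length_add_length_quotient (𝔪 • (⊤ : Submodule R M))
  have splitD := length_eq_length_add_length_quotient (𝔪 • (⊤ : Submodule R (Module.Dual R M)))
  rw [lengthM] at splitM
  rw [lengthD] at splitD
  rw [splitM, splitD] at seqM
  rw [← (Module.evalEquiv R M).length_eq, splitM, splitD] at seqD
  have heq := eq_of_add_mul_eq_mul Module.length_ne_top Module.length_ne_top Module.length_ne_top
    Module.length_ne_top Module.length_pos.ne' seqM seqD
  rw [← heq] at lengthM splitM
  exact ⟨lengthM, by rw [splitM]; ring⟩

theorem stmt_7_general (R : Type) [CommRing R] [IsNoetherianRing R] [IsLocalRing R]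
    (hng : ¬ IsGorensteinLocalRing R) (hm3 : maximalIdeal R ^ 3 = ⊥)
    (M : Type) [AddCommGroup M] [Module R M] [Module.Finite R M] [Module.IsReflexive R M]
    (hM : ∀ (f : Module.Dual R M) (x : M), f x ∈ maximalIdeal R)
    (hExt : Subsingleton (ExtGrp R M R 1))
    (hExtDual : Subsingleton (ExtGrp R (Module.Dual R M) R 1)) :
    ∃ r b : ℕ, typeLen R = (r : ℕ∞) ∧
      mlength R (M ⧸ maximalIdeal R • (⊤ : Submodule R M)) = (b : ℕ∞) ∧
      mlength R ↥(maximalIdeal R • (⊤ : Submodule R M)) = ((r * b : ℕ) : ℕ∞) ∧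
      mlength R M = ((b * (1 + r) : ℕ) : ℕ∞) := by
  have : IsArtinianRing R := (isArtinianRing_iff_isNilpotent_maximalIdeal R).2 ⟨3, hm3⟩
  have := (subsingleton_ext_succ_iff _ _ 0).1 hExt
  have := (subsingleton_ext_succ_iff _ _ 0).1 hExtDual
  obtain ⟨hmM, hlM⟩ := length_smul_top_eq_and_length_eq_of_isReflexive
    (fun _ ↦ hng (isGorensteinLocalRing_of_injective R)) hm3 M hM
  obtain ⟨r, hr⟩ := ENat.ne_top_iff_exists.1
    (Module.length_ne_top (R := R) (M := (R ⧸ maximalIdeal R) →ₗ[R] R))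
  obtain ⟨b, hb⟩ := ENat.ne_top_iff_exists.1
    (Module.length_ne_top (R := R) (M := M ⧸ maximalIdeal R • (⊤ : Submodule R M)))
  refine ⟨r, b, ?_⟩
  simp only [typeLen, mlength, ← Module.coe_length, hmM, hlM, ← hr, ← hb, true_and]
  exact ⟨by rw [mul_comm r]; rfl, rfl⟩

/-- if b is the minimal number of generators of M, then
dim_k mM = r·b and ℓ(M) = b(1+r). -/
theorem stmt_7 (R : Type) [CommRing R] [IsNoetherianRing R] [IsLocalRing R]
    (hng : ¬ IsGorensteinLocalRing R)
    (hm3 : (IsLocalRing.maximalIdeal R) ^ 3 = ⊥)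
    (hm2 : (IsLocalRing.maximalIdeal R) ^ 2 ≠ ⊥)
    (M : Type) [AddCommGroup M] [Module R M] [Module.Finite R M]
    (hind : IsIndecomposableModule R M) (hnf : ¬ Module.Free R M)
    (hG : GDimZero R M) :
    ∃ r b : ℕ, typeLen R = (r : ℕ∞) ∧
      mlength R (M ⧸ ((IsLocalRing.maximalIdeal R) • (⊤ : Submodule R M))) = (b : ℕ∞) ∧
      mlength R (↥((IsLocalRing.maximalIdeal R) • (⊤ : Submodule R M))) = ((r * b : ℕ) : ℕ∞) ∧
      mlength R M = ((b * (1 + r) : ℕ) : ℕ∞) := by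
  have : Module.IsReflexive R M := ⟨hG.1⟩
  exact stmt_7_general R hng hm3 M (dual_apply_mem_maximalIdeal hind hnf)
    (hG.2.1 1 one_pos) (hG.2.2 1 one_pos)
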